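/- Let S = {x_1, …, x_n} be a finite family of ranking vectors from X_m, let ε ≥ 0, and let S̄_1, …, S̄_k be a partition of S that is ε-optimal for the k-means clustering problem, i.e., v_KMC(S̄_1, …, S̄_k) ≤ (1 + ε) v_KMC*, where v_KMC* is the minimum KMC objective over all partitions of S into at most k nonempty clusters. Then this partition is (1 + 2ε)-optimal for the ranking clustering problem: v_KRC(S̄_1, …, S̄_k) ≤ (2 + 2ε) v_KRC*, where v_KRC* is the minimum KRC objective over the same partitions. -/

import Mathlib

/-- A ranking vector of dimension `m`: its entries are a permutation of `1, 2, …, m`. -/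
def IsRankingVector {m : ℕ} (x : Fin m → ℝ) : Prop :=
  ∃ σ : Equiv.Perm (Fin m), ∀ i, x i = ((σ i : ℕ) : ℝ) + 1

/-- The KMC objective of a partition (given by the assignment `c`), with optimally
chosen (mean) centroids. -/
noncomputable def vKMC {n m k : ℕ} (p : Fin n → Fin m → ℝ) (c : Fin n → Fin k) : ℝ :=
  ∑ ℓ, ∑ i ∈ Finset.univ.filter (fun i => c i = ℓ), ∑ j,
    (p i j - (∑ i' ∈ Finset.univ.filter (fun i' => c i' = ℓ), p i' j) /
      ((Finset.univ.filter (fun i' => c i' = ℓ)).card : ℝ)) ^ 2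

/-- The KRC objective of a partition (given by the assignment `c`), with optimally
chosen ranking-vector centroids. -/
noncomputable def vKRC {n m k : ℕ} (p : Fin n → Fin m → ℝ) (c : Fin n → Fin k) : ℝ :=
  ∑ ℓ, sInf {v : ℝ | ∃ y : Fin m → ℝ, IsRankingVector y ∧
    v = ∑ i ∈ Finset.univ.filter (fun i => c i = ℓ), ∑ j, (p i j - y j) ^ 2}

/-!
For a finite cluster with mean `ȳ` and `N` points, Huygens' identity
`∑ ‖xᵢ - y‖² = ∑ ‖xᵢ - ȳ‖² + N ‖ȳ - y‖²` holds for every `y`. Hence the mean is the best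
unconstrained centroid, so restricting the centroids to a set `Y` can only increase the cost.
Averaging the identity over `y = x₁, …, x_N` shows that some data point, used as a centroid, costs
at most twice as much as the mean. If the data lie in `Y`, the constrained cost of every partition
is therefore between one and two times its k-means cost, and approximation guarantees transfer
at the price of a factor of two.
-/

section Mean

variable {ι E : Type*} [AddCommGroup E] [Module ℝ E]

/-- The mean of the points `x i`, `i ∈ s`, which is the optimal unconstrained centroid of the
cluster `s`. The mean of the empty cluster is `0`. -/
noncomputable def clusterMean (s : Finset ι) (x : ι → E) : E :=
  (s.card : ℝ)⁻¹ • ∑ i ∈ s, x i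

theorem sum_sub_clusterMean (s : Finset ι) (x : ι → E) :
    ∑ i ∈ s, (x i - clusterMean s x) = 0 := by
  rcases s.eq_empty_or_nonempty with rfl | hs
  · exact Finset.sum_empty
  · have hcard : (s.card : ℝ) ≠ 0 := Nat.cast_ne_zero.mpr hs.card_ne_zero
    rw [Finset.sum_sub_distrib, Finset.sum_const, ← Nat.cast_smul_eq_nsmul ℝ, clusterMean,
      smul_inv_smul₀ hcard, sub_self]

end Mean

section Cluster

variable {ι E : Type*} [NormedAddCommGroup E] [InnerProductSpace ℝ E]

theorem sum_norm_sub_sq_eq_add_card_mul (s : Finset ι) (x : ι → E) (y : E) :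
    ∑ i ∈ s, ‖x i - y‖ ^ 2 =
      ∑ i ∈ s, ‖x i - clusterMean s x‖ ^ 2 + s.card * ‖clusterMean s x - y‖ ^ 2 := by
  have hcross : ∑ i ∈ s, inner ℝ (x i - clusterMean s x) (clusterMean s x - y) = 0 := by
    rw [← sum_inner, sum_sub_clusterMean, inner_zero_left]
  calc ∑ i ∈ s, ‖x i - y‖ ^ 2
      = ∑ i ∈ s, (‖x i - clusterMean s x‖ ^ 2
          + 2 * inner ℝ (x i - clusterMean s x) (clusterMean s x - y)
          + ‖clusterMean s x - y‖ ^ 2) :=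
        Finset.sum_congr rfl fun i _ => by
          rw [← norm_add_sq_real, sub_add_sub_cancel]
    _ = ∑ i ∈ s, ‖x i - clusterMean s x‖ ^ 2 + s.card * ‖clusterMean s x - y‖ ^ 2 := by
        rw [Finset.sum_add_distrib, Finset.sum_add_distrib, ← Finset.mul_sum, hcross,
          Finset.sum_const, nsmul_eq_mul, mul_zero, add_zero]

theorem sum_norm_sub_clusterMean_sq_le (s : Finset ι) (x : ι → E) (y : E) :
    ∑ i ∈ s, ‖x i - clusterMean s x‖ ^ 2 ≤ ∑ i ∈ s, ‖x i - y‖ ^ 2 := by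
  rw [sum_norm_sub_sq_eq_add_card_mul s x y]
  exact le_add_of_nonneg_right (by positivity)

theorem sum_sum_norm_sub_sq (s : Finset ι) (x : ι → E) :
    ∑ a ∈ s, ∑ i ∈ s, ‖x i - x a‖ ^ 2 =
      s.card * (2 * ∑ i ∈ s, ‖x i - clusterMean s x‖ ^ 2) := by
  simp only [sum_norm_sub_sq_eq_add_card_mul s x (x _), Finset.sum_add_distrib, Finset.sum_const,
    nsmul_eq_mul, ← Finset.mul_sum, norm_sub_rev (clusterMean s x)]
  ring

theorem exists_mem_sum_norm_sub_sq_le_two_mul {s : Finset ι} (hs : s.Nonempty) (x : ι → E) :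
    ∃ a ∈ s, ∑ i ∈ s, ‖x i - x a‖ ^ 2 ≤ 2 * ∑ i ∈ s, ‖x i - clusterMean s x‖ ^ 2 :=
  Finset.exists_le_of_sum_le hs <| by
    rw [sum_sum_norm_sub_sq, Finset.sum_const, nsmul_eq_mul]

theorem iInf_sum_norm_sub_sq_le_two_mul {s : Finset ι} {Y : Set E} {x : ι → E}
    (hx : ∀ i ∈ s, x i ∈ Y) :
    ⨅ y : Y, ∑ i ∈ s, ‖x i - y‖ ^ 2 ≤ 2 * ∑ i ∈ s, ‖x i - clusterMean s x‖ ^ 2 := by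
  rcases s.eq_empty_or_nonempty with rfl | hs
  · simp
  · obtain ⟨a, has, hle⟩ := exists_mem_sum_norm_sub_sq_le_two_mul hs x
    have hbdd : BddBelow (Set.range fun y : Y => ∑ i ∈ s, ‖x i - y‖ ^ 2) :=
      ⟨0, Set.forall_mem_range.mpr fun _ => by positivity⟩
    exact (ciInf_le hbdd ⟨x a, hx a has⟩).trans hle

end Cluster

section Clustering

variable {ι κ E : Type*} [Fintype ι] [Fintype κ] [DecidableEq κ]
  [NormedAddCommGroup E] [InnerProductSpace ℝ E]

/-- The k-means cost of the partition of the points `x i` into the fibres of `c`. Fibres may be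
empty, which models partitions into at most `card κ` clusters. -/
noncomputable def kMeansCost (x : ι → E) (c : ι → κ) : ℝ :=
  ∑ ℓ, ∑ i with c i = ℓ, ‖x i - clusterMean {i' | c i' = ℓ} x‖ ^ 2

/-- The clustering cost of the partition of the points `x i` into the fibres of `c` when the
centroids have to be chosen from `Y`; ranking clustering is the case of ranking vectors. For
`Y = ∅` the infimum takes the junk value `0`. -/
noncomputable def constrainedCost (Y : Set E) (x : ι → E) (c : ι → κ) : ℝ :=
  ∑ ℓ, ⨅ y : Y, ∑ i with c i = ℓ, ‖x i - y‖ ^ 2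

theorem kMeansCost_le_constrainedCost {Y : Set E} (hY : Y.Nonempty) (x : ι → E) (c : ι → κ) :
    kMeansCost x c ≤ constrainedCost Y x c :=
  have : Nonempty Y := hY.to_subtype
  Finset.sum_le_sum fun _ _ => le_ciInf fun y => sum_norm_sub_clusterMean_sq_le _ x y

theorem constrainedCost_le_two_mul_kMeansCost {Y : Set E} {x : ι → E} (hx : ∀ i, x i ∈ Y)
    (c : ι → κ) : constrainedCost Y x c ≤ 2 * kMeansCost x c := by
  rw [kMeansCost, Finset.mul_sum]
  exact Finset.sum_le_sum fun _ _ => iInf_sum_norm_sub_sq_le_two_mul fun i _ => hx i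

theorem stmt6_general {Y : Set E} (hY : Y.Nonempty) {x : ι → E} (hx : ∀ i, x i ∈ Y)
    {ε : ℝ} (hε : 0 ≤ ε) {cbar : ι → κ}
    (hopt : kMeansCost x cbar ≤ (1 + ε) * ⨅ c : ι → κ, kMeansCost x c) :
    constrainedCost Y x cbar ≤ (2 + 2 * ε) * ⨅ c : ι → κ, constrainedCost Y x c := by
  have hinf : ⨅ c : ι → κ, kMeansCost x c ≤ ⨅ c : ι → κ, constrainedCost Y x c :=
    ciInf_mono (Set.finite_range _).bddBelow fun c => kMeansCost_le_constrainedCost hY x c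
  calc constrainedCost Y x cbar
      ≤ 2 * kMeansCost x cbar := constrainedCost_le_two_mul_kMeansCost hx cbar
    _ ≤ 2 * ((1 + ε) * ⨅ c : ι → κ, kMeansCost x c) := by gcongr
    _ ≤ 2 * ((1 + ε) * ⨅ c : ι → κ, constrainedCost Y x c) := by gcongr
    _ = (2 + 2 * ε) * ⨅ c : ι → κ, constrainedCost Y x c := by ring

end Clustering

section RankingVectors

/-- The ranking vectors `X_m` as a subset of Euclidean space; `Fin m → ℝ` itself carries the
supremum norm. -/
def rankingVectors (m : ℕ) : Set (EuclideanSpace ℝ (Fin m)) :=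
  {y | IsRankingVector y.ofLp}

theorem rankingVectors_nonempty (m : ℕ) : (rankingVectors m).Nonempty :=
  ⟨WithLp.toLp 2 fun j => (j : ℝ) + 1, Equiv.refl _, fun _ => rfl⟩

variable {n m k : ℕ} (p : Fin n → Fin m → ℝ) (c : Fin n → Fin k)

theorem vKMC_eq_kMeansCost : vKMC p c = kMeansCost (fun i => WithLp.toLp 2 (p i)) c := by
  simp [vKMC, kMeansCost, clusterMean, EuclideanSpace.real_norm_sq_eq, div_eq_inv_mul]

theorem vKRC_eq_constrainedCost :
    vKRC p c = constrainedCost (rankingVectors m) (fun i => WithLp.toLp 2 (p i)) c := by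
  refine Finset.sum_congr rfl fun ℓ _ => congrArg sInf (Set.ext fun v => ?_)
  constructor
  · rintro ⟨y, hy, rfl⟩
    exact ⟨⟨WithLp.toLp 2 y, hy⟩, by simp [EuclideanSpace.real_norm_sq_eq]⟩
  · rintro ⟨⟨y, hy⟩, rfl⟩
    exact ⟨y.ofLp, hy, by simp [EuclideanSpace.real_norm_sq_eq]⟩

end RankingVectors

/-- An `ε`-optimal partition for `KMC` is a `(1 + 2ε)`-optimal partition for `KRC`:
its KRC objective is at most `(2 + 2ε)` times the optimal KRC value. -/
theorem stmt6 (n m k : ℕ) (hk : 1 ≤ k) (ε : ℝ) (hε : 0 ≤ ε)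
    (p : Fin n → Fin m → ℝ) (hp : ∀ i, IsRankingVector (p i))
    (cbar : Fin n → Fin k)
    (hopt : vKMC p cbar ≤ (1 + ε) * sInf (Set.range fun c : Fin n → Fin k => vKMC p c)) :
    vKRC p cbar ≤ (2 + 2 * ε) * sInf (Set.range fun c : Fin n → Fin k => vKRC p c) := by
  simp only [vKMC_eq_kMeansCost, vKRC_eq_constrainedCost] at hopt ⊢
  exact stmt6_general (rankingVectors_nonempty m) hp hε hopt
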